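/- Let L_g be a real symmetric positive definite matrix with largest eigenvalue λ_max(L_g), and let τ ≥ 0 be a constant time delay. Then every complex number s satisfying the characteristic equation det(s·I + e^{−τs}·L_g) = 0 has strictly negative real part if and only if τ < π/(2·λ_max(L_g)). Equivalently (scalar form): for every real λ > 0, every root s ∈ ℂ of s + λ·e^{−τs} = 0 satisfies Re s < 0 if and only if τ·λ < π/2. -/

import Mathlib

/-!
The matrix condition reduces to the scalar one: `e^{-τs} ≠ 0`, so the determinant is, up to a
nonzero factor, the characteristic polynomial of `L_g` at `-s / e^{-τs}`, and it vanishes iff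
`s + λ e^{-τs} = 0` for some eigenvalue `λ` (`det_delay_eq_zero_iff`).

For the scalar equation write `s = a + ib`, so that `a = -λ e^{-τa} cos (τb)` and
`b = λ e^{-τa} sin (τb)`. If `τλ < π/2` and `a ≥ 0`, then `|τb| ≤ τλ < π/2`, hence
`cos (τb) > 0` and `a < 0`, a contradiction (`re_neg_of_mul_lt`).
If `K = τλ ≥ π/2`, eliminating `x = τa` via `x = -y cot y` leaves the real equation
`K e^{y cot y} sin y = y` for `y = τb`, which has a solution in `[π/2, π)` by the intermediate
value theorem; there `cot y ≤ 0`, so `x ≥ 0` (`exists_root_of_le`).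
-/

open scoped Matrix

theorem re_neg_of_mul_lt {τ l : ℝ} (hτ : 0 ≤ τ) (hl : 0 < l) (h : τ * l < Real.pi / 2)
    {s : ℂ} (hs : s + (l : ℂ) * Complex.exp (-(τ : ℂ) * s) = 0) : s.re < 0 := by
  by_contra! ha
  have hre := congrArg Complex.re hs
  have him := congrArg Complex.im hs
  simp [Complex.exp_re, Complex.exp_im] at hre him
  have hE : Real.exp (-(τ * s.re)) ≤ 1 := Real.exp_le_one_iff.2 (by nlinarith)
  have hE0 := Real.exp_pos (-(τ * s.re))
  have hb : |s.im| ≤ l := by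
    have h1 : s.im = l * (Real.exp (-(τ * s.re)) * Real.sin (τ * s.im)) := by linarith
    rw [h1, abs_mul, abs_mul, abs_of_pos hl, abs_of_pos hE0]
    have := mul_le_mul hE (Real.abs_sin_le_one (τ * s.im)) (abs_nonneg _) zero_le_one
    nlinarith
  have hy : |τ * s.im| < Real.pi / 2 := by
    rw [abs_mul, abs_of_nonneg hτ]
    exact (mul_le_mul_of_nonneg_left hb hτ).trans_lt h
  have hc : 0 < Real.cos (τ * s.im) := Real.cos_pos_of_mem_Ioo (abs_lt.1 hy)
  have := mul_pos hl (mul_pos hE0 hc)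
  linarith

/-- Past the threshold `K = π / 2`, the normalized equation `x + iy + K e^{-(x + iy)} = 0`, split
into real and imaginary parts, has a solution with `x ≥ 0`. -/
theorem exists_normalized_root {K : ℝ} (hK : Real.pi / 2 ≤ K) :
    ∃ x y : ℝ, 0 ≤ x ∧ x + K * (Real.exp (-x) * Real.cos y) = 0 ∧
      y = K * (Real.exp (-x) * Real.sin y) := by
  have hpi := Real.pi_pos
  have hpi3 := Real.pi_gt_three
  have hK1 : 0 < K + 1 := by linarith
  -- `δ` solves `K * δ = π - δ`, which makes the sign at the endpoint `π - δ` follow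
  -- from `sin δ ≤ δ`.
  set δ := Real.pi / (K + 1) with hδ
  have hδ0 : 0 < δ := by positivity
  have hKδ : K * δ = Real.pi - δ := by rw [hδ]; field_simp; ring
  have hδ2 : δ ≤ Real.pi / 2 := by nlinarith
  have hsin : ∀ y ∈ Set.Icc (Real.pi / 2) (Real.pi - δ), 0 < Real.sin y := fun y hy =>
    Real.sin_pos_of_pos_of_lt_pi (by linarith [hy.1]) (by linarith [hy.2])
  have hcot : ∀ y ∈ Set.Icc (Real.pi / 2) (Real.pi - δ),
      y * Real.cos y / Real.sin y ≤ 0 := fun y hy =>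
    div_nonpos_of_nonpos_of_nonneg
      (mul_nonpos_of_nonneg_of_nonpos (by linarith [hy.1])
        (Real.cos_nonpos_of_pi_div_two_le_of_le hy.1 (by linarith [hy.2]))) (hsin y hy).le
  have hle : Real.pi / 2 ≤ Real.pi - δ := by linarith
  have hcont : ContinuousOn
      (fun y => K * (Real.exp (y * Real.cos y / Real.sin y) * Real.sin y) - y)
      (Set.Icc (Real.pi / 2) (Real.pi - δ)) := by
    have : ContinuousOn (fun y => y * Real.cos y / Real.sin y)
        (Set.Icc (Real.pi / 2) (Real.pi - δ)) :=
      ContinuousOn.div (by fun_prop) (by fun_prop) (fun y hy => (hsin y hy).ne')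
    fun_prop
  have h0 : (0 : ℝ) ∈ (fun y => K * (Real.exp (y * Real.cos y / Real.sin y) * Real.sin y) - y) ''
      Set.Icc (Real.pi / 2) (Real.pi - δ) := by
    refine intermediate_value_Icc' hle hcont ⟨?_, ?_⟩
    · have hm := Set.right_mem_Icc.2 hle
      have h1 := Real.exp_le_one_iff.2 (hcot _ hm)
      have h2 := hsin _ hm
      have h3 : Real.sin (Real.pi - δ) ≤ δ := by
        rw [Real.sin_pi_sub]; exact Real.sin_le hδ0.le
      have h4 := (mul_le_of_le_one_left h2.le h1).trans h3
      have := mul_le_mul_of_nonneg_left h4 (show 0 ≤ K by linarith)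
      linarith
    · simpa using hK
  obtain ⟨y, hy, hy0⟩ := h0
  simp only at hy0
  have hs := hsin y hy
  refine ⟨-(y * Real.cos y / Real.sin y), y, by linarith [hcot y hy], ?_, ?_⟩
  · rw [neg_neg]
    have hx : y * Real.cos y / Real.sin y
        = K * (Real.exp (y * Real.cos y / Real.sin y) * Real.cos y) := by
      rw [div_eq_iff hs.ne']
      linear_combination (-Real.cos y) * hy0
    linarith
  · rw [neg_neg]; linarith

theorem exists_root_of_le {τ l : ℝ} (hτ : 0 ≤ τ) (h : Real.pi / 2 ≤ τ * l) :
    ∃ s : ℂ, s + (l : ℂ) * Complex.exp (-(τ : ℂ) * s) = 0 ∧ 0 ≤ s.re := by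
  have hτ0 : τ ≠ 0 := by
    rintro rfl
    linarith [Real.pi_pos]
  obtain ⟨x, y, hx, hre, him⟩ := exists_normalized_root h
  refine ⟨⟨x / τ, y / τ⟩, ?_, div_nonneg hx hτ⟩
  apply Complex.ext
  · simp [Complex.exp_re, mul_div_cancel₀ _ hτ0]
    field_simp
    linarith
  · simp [Complex.exp_im, mul_div_cancel₀ _ hτ0]
    field_simp
    linarith

theorem scalar_stability_iff {τ l : ℝ} (hτ : 0 ≤ τ) (hl : 0 < l) :
    (∀ s : ℂ, s + (l : ℂ) * Complex.exp (-(τ : ℂ) * s) = 0 → s.re < 0) ↔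
      τ * l < Real.pi / 2 := by
  refine ⟨fun h => ?_, fun h s hs => re_neg_of_mul_lt hτ hl h hs⟩
  by_contra! hc
  obtain ⟨s, hs, hs0⟩ := exists_root_of_le hτ hc
  exact absurd (h s hs) (not_lt.2 hs0)

theorem det_delay_eq_zero_iff {n : Type*} [Fintype n] [DecidableEq n] {A : Matrix n n ℝ}
    (hA : A.IsHermitian) (s : ℂ) {c : ℂ} (hc : c ≠ 0) :
    (s • (1 : Matrix n n ℂ) + c • A.map Complex.ofReal).det = 0 ↔
      ∃ i, s + (hA.eigenvalues i : ℂ) * c = 0 := by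
  have h1 : s • (1 : Matrix n n ℂ) + c • A.map Complex.ofReal
      = (-c) • (Matrix.scalar n (-s / c) - A.map Complex.ofRealHom) := by
    ext i j
    by_cases hij : i = j
    · subst hij
      simp
      field_simp
      ring
    · simp [hij]
  rw [h1, Matrix.det_smul, ← Matrix.eval_charpoly, Matrix.charpoly_map, hA.charpoly_eq]
  simp only [Polynomial.map_prod, Polynomial.eval_prod, mul_eq_zero, pow_eq_zero_iff',
    neg_eq_zero, hc, false_and, false_or, Finset.prod_eq_zero_iff, Finset.mem_univ, true_and]
  refine exists_congr fun i => ?_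
  simp only [Polynomial.map_sub, Polynomial.map_X, Polynomial.map_C, Polynomial.eval_sub,
    Polynomial.eval_X, Polynomial.eval_C, sub_eq_zero, div_eq_iff hc]
  simp only [RCLike.ofReal_real_eq_id, id, Complex.ofRealHom_eq_coe]
  constructor <;> intro h <;> linear_combination -h

/-- for a real symmetric positive definite matrix `L_g` and a constant delay
`τ ≥ 0`, all roots `s` of `det(s·I + e^{−τs}·L_g) = 0` have negative real part iff
`τ < π/(2·λ_max(L_g))`; equivalently (scalar form), for every `λ > 0` every root `s ∈ ℂ`
of `s + λ·e^{−τs} = 0` satisfies `Re s < 0` iff `τ·λ < π/2`. -/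
theorem delayed_velocity_tracking_stability (m : ℕ) (hm : 0 < m)
    (Lg : Matrix (Fin m) (Fin m) ℝ) (hPD : Lg.PosDef) (τ : ℝ) (hτ : 0 ≤ τ) :
    ((∀ s : ℂ,
        (s • (1 : Matrix (Fin m) (Fin m) ℂ)
          + Complex.exp (-(τ : ℂ) * s) • Lg.map Complex.ofReal).det = 0 → s.re < 0) ↔
      τ < Real.pi / (2 * ⨆ i, hPD.1.eigenvalues i)) ∧
    (∀ l : ℝ, 0 < l →
      ((∀ s : ℂ, s + (l : ℂ) * Complex.exp (-(τ : ℂ) * s) = 0 → s.re < 0) ↔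
        τ * l < Real.pi / 2)) := by
  refine ⟨?_, fun l hl => scalar_stability_iff hτ hl⟩
  have : Nonempty (Fin m) := ⟨⟨0, hm⟩⟩
  obtain ⟨k, hk⟩ := exists_eq_ciSup_of_finite (f := hPD.1.eigenvalues)
  have hmax : ∀ i, hPD.1.eigenvalues i ≤ hPD.1.eigenvalues k := fun i =>
    hk ▸ le_ciSup (Set.finite_range _).bddAbove i
  have hpos := hPD.eigenvalues_pos
  rw [← hk, lt_div_iff₀ (by linarith [hpos k])]
  simp only [det_delay_eq_zero_iff hPD.1 _ (Complex.exp_ne_zero _)]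
  constructor
  · intro h
    have := (scalar_stability_iff hτ (hpos k)).1 fun s hs => h s ⟨k, hs⟩
    linarith
  · rintro h s ⟨i, hs⟩
    refine re_neg_of_mul_lt hτ (hpos i) ?_ hs
    linarith [mul_le_mul_of_nonneg_left (hmax i) hτ]
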